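/- arXiv:2506.02319 — 5 statements merged into one kernel-verified Lean document; each statement's English description precedes it below -/
import Mathlib

section
/- Let G be a LERF group acting on an infinite set S with only finitely many orbits of 2-element subsets (i.e., the action is almost 2-transitive). Then there exists a point s ∈ S whose stabiliser in G is not finitely generated. -/
open Pointwise

/-- A group is LERF if every finitely generated subgroup equals the intersection of all
finite-index subgroups containing it. -/
def IsLERF (G : Type*) [Group G] : Prop :=
  ∀ H : Subgroup G, H.FG → H = sInf {K : Subgroup G | H ≤ K ∧ K.FiniteIndex}

theorem inj_aux {G S : Type*} [Group G] [MulAction G S] (T : Set (Set S))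
    (h2 : ∀ A : Set S, A.ncard = 2 → ∃ B ∈ T, ∃ g : G, g • B = A) (s : S)
    (K L : Subgroup G) (hL : MulAction.stabilizer G s ≤ L)
    (h : {B ∈ T | ∃ g g' : G, B = {g • s, g' • s} ∧ g⁻¹ * g' ∈ K} ⊆
      {B ∈ T | ∃ g g' : G, B = {g • s, g' • s} ∧ g⁻¹ * g' ∈ L}) : K ≤ L := by
  intro x hx
  by_cases hxs : x • s = s
  · exact hL hxs
  obtain ⟨B, hB, k, hk⟩ := h2 {s, x • s} (Set.ncard_pair (Ne.symm hxs))
  have hBe : B = {k⁻¹ • s, (k⁻¹ * x) • s} := by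
    rw [← inv_smul_smul k B, hk, mul_smul, ← Set.image_smul, Set.image_pair]
  obtain ⟨-, g, g', hgg, hm⟩ := h ⟨hB, k⁻¹, k⁻¹ * x, hBe, by simpa using hx⟩
  have tr : ∀ a b : G, a • s = b • s → a⁻¹ * b ∈ L := fun a b hab => hL (by
    rw [MulAction.mem_stabilizer_iff, mul_smul, ← hab, inv_smul_smul])
  rw [hBe, Set.pair_eq_pair_iff] at hgg
  rcases hgg with ⟨h1, h3⟩ | ⟨h1, h3⟩
  · have := L.mul_mem (L.mul_mem (tr _ _ h1) hm) (tr _ _ h3.symm)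
    simpa [mul_assoc] using this
  · have := L.mul_mem (L.mul_mem (tr _ _ h1) (L.inv_mem hm)) (tr _ _ h3.symm)
    simpa [mul_assoc] using this

theorem orbit_finite_aux {G S : Type*} [Group G] [MulAction G S]
    (hG : IsLERF G) (T : Set (Set S)) (hT : T.Finite)
    (h2 : ∀ A : Set S, A.ncard = 2 → ∃ B ∈ T, ∃ g : G, g • B = A) (s : S)
    (hs : (MulAction.stabilizer G s).FG) : (MulAction.orbit G s).Finite := by
  have h := hG _ hs
  set X := {K : Subgroup G | MulAction.stabilizer G s ≤ K ∧ K.FiniteIndex} with hX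
  have hXf : X.Finite := by
    refine Set.Finite.of_finite_image (f := fun K : Subgroup G =>
      {B ∈ T | ∃ g g' : G, B = {g • s, g' • s} ∧ g⁻¹ * g' ∈ K})
      (hT.finite_subsets.subset ?_) ?_
    · rintro _ ⟨K, -, rfl⟩
      exact Set.sep_subset _ _
    · intro K hK L hL hKL
      exact le_antisymm (inj_aux T h2 s K L hL.1 hKL.le) (inj_aux T h2 s L K hK.1 hKL.ge)
  have : (MulAction.stabilizer G s).FiniteIndex := by
    rw [h, sInf_eq_iInf']
    have := hXf.to_subtype
    exact Subgroup.finiteIndex_iInf fun K => K.2.2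
  have : Finite (G ⧸ MulAction.stabilizer G s) := inferInstance
  exact Set.finite_coe_iff.mp (Finite.of_equiv _ (MulAction.orbitEquivQuotientStabilizer G s).symm)

/-- **Lemma (LERF, almost 2-transitive actions).**
If a LERF group `G` acts on an infinite set `S` with only finitely many orbits of
2-element subsets, then some point of `S` has a stabiliser that is not finitely generated. -/
theorem lerf_almost_two_transitive_exists_stabilizer_not_fg
    {G S : Type*} [Group G] [MulAction G S] [Infinite S]
    (hG : IsLERF G)
    (h2 : ∃ T : Set (Set S), T.Finite ∧
      ∀ A : Set S, A.ncard = 2 → ∃ B ∈ T, ∃ g : G, g • B = A) :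
    ∃ s : S, ¬ (MulAction.stabilizer G s).FG := by
  classical
  by_contra hcon
  push Not at hcon
  obtain ⟨T, hT, h2⟩ := h2
  have key : ∀ s : S, (MulAction.orbit G s).Finite := fun s => orbit_finite_aux hG T hT h2 s (hcon s)
  have hfin : (⋃ B ∈ {B ∈ T | B.Finite}, ⋃ b ∈ B, MulAction.orbit G b).Finite := by
    refine Set.Finite.biUnion (hT.subset (Set.sep_subset _ _)) ?_
    intro B hB
    exact Set.Finite.biUnion hB.2 (fun b _ => key b)
  refine Set.infinite_univ (α := S) (hfin.subset ?_)
  intro s _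
  obtain ⟨t, ht⟩ := exists_ne s
  obtain ⟨B, hB, g, hg⟩ := h2 {s, t} (Set.ncard_pair ht.symm)
  have hBe : B = g⁻¹ • ({s, t} : Set S) := by rw [← hg, inv_smul_smul]
  have hBf : B.Finite := by rw [hBe]; exact (Set.toFinite _).smul_set
  simp only [Set.mem_iUnion]
  refine ⟨B, ⟨hB, hBf⟩, g⁻¹ • s, ?_, ?_⟩
  · rw [hBe]; exact Set.smul_mem_smul_set (by simp)
  · exact ⟨g, by simp⟩
end

section
/- Let G be a LERF group acting transitively on an infinite set S with only finitely many orbits of 2-element subsets. Then for every point s ∈ S, the stabiliser of s in G is not finitely generated. -/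
open Pointwise

/-- **Lemma (LERF, transitive almost 2-transitive actions).**
If a LERF group `G` acts transitively on an infinite set `S` with only finitely many orbits
of 2-element subsets, then the stabiliser of every point of `S` is not finitely generated. -/
theorem lerf_transitive_almost_two_transitive_stabilizer_not_fg
    {G S : Type*} [Group G] [MulAction G S] [Infinite S]
    [MulAction.IsPretransitive G S]
    (hG : IsLERF G)
    (h2 : ∃ T : Set (Set S), T.Finite ∧
      ∀ A : Set S, A.ncard = 2 → ∃ B ∈ T, ∃ g : G, g • B = A) :
    ∀ s : S, ¬ (MulAction.stabilizer G s).FG := by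
  classical
  obtain ⟨T, hT, h2⟩ := h2
  intro s hs
  have key : ∀ B : Set S, ∃ K : Subgroup G, MulAction.stabilizer G s ≤ K ∧ K.FiniteIndex ∧
      (B.ncard = 2 → ∃ a b : G, B = {a • s, b • s} ∧ a⁻¹ * b ∉ K) := by
    intro B
    by_cases hB : B.ncard = 2
    · obtain ⟨x, y, hxy, rfl⟩ := Set.ncard_eq_two.mp hB
      obtain ⟨a, rfl⟩ := MulAction.exists_smul_eq G s x
      obtain ⟨b, rfl⟩ := MulAction.exists_smul_eq G s y
      have hn : a⁻¹ * b ∉ MulAction.stabilizer G s := by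
        intro h
        apply hxy
        rw [MulAction.mem_stabilizer_iff, mul_smul, inv_smul_eq_iff] at h
        exact h.symm
      rw [hG _ hs, Subgroup.mem_sInf] at hn
      push Not at hn
      obtain ⟨K, ⟨hK1, hK2⟩, hK3⟩ := hn
      exact ⟨K, hK1, hK2, fun _ => ⟨a, b, rfl, hK3⟩⟩
    · exact ⟨⊤, le_top, inferInstance, fun h => absurd h hB⟩
  choose K hHK hKf hK using key
  have hfi : (⨅ B ∈ hT.toFinset, K B).FiniteIndex :=
    Subgroup.finiteIndex_iInf' _ (fun B _ => hKf B)
  have hle : (⨅ B ∈ hT.toFinset, K B) ≤ MulAction.stabilizer G s := by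
    intro k hk
    by_contra hks
    rw [MulAction.mem_stabilizer_iff] at hks
    have hc : ({s, k • s} : Set S).ncard = 2 := Set.ncard_pair (Ne.symm hks)
    obtain ⟨B, hBT, g, hg⟩ := h2 _ hc
    have hkB : k ∈ K B := by
      simp only [Subgroup.mem_iInf] at hk
      exact hk B (hT.mem_toFinset.mpr hBT)
    have hB2 : B.ncard = 2 := by
      rw [← hg, Set.ncard_smul_set] at hc
      exact hc
    obtain ⟨a, b, hBe, hab⟩ := hK B hB2
    have aux : ∀ a b : G, s = g • a • s → k • s = g • b • s → a⁻¹ * b ∈ K B := by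
      intro a b h1 h3
      have m1 : g * a ∈ K B := hHK B (by
        rw [MulAction.mem_stabilizer_iff, mul_smul]; exact h1.symm)
      have m2 : k⁻¹ * (g * b) ∈ K B := hHK B (by
        rw [MulAction.mem_stabilizer_iff, mul_smul, mul_smul, ← h3, inv_smul_smul])
      have := (K B).mul_mem ((K B).mul_mem ((K B).inv_mem m1) hkB) m2
      convert this using 1
      group
    rw [hBe, Set.smul_set_insert, Set.smul_set_singleton] at hg
    rcases Set.pair_eq_pair_iff.mp hg with ⟨h1, h3⟩ | ⟨h1, h3⟩
    · exact hab (aux a b h1.symm h3.symm)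
    · apply hab
      have := (K B).inv_mem (aux b a h3.symm h1.symm)
      simpa using this
  have hH : (MulAction.stabilizer G s).FiniteIndex := Subgroup.finiteIndex_of_le hle
  have hi := hH.index_ne_zero
  rw [MulAction.index_stabilizer_of_transitive] at hi
  exact hi Nat.card_eq_zero_of_infinite
end

section
/- Let G be a LERF group and let H ≤ G be a finitely generated subgroup with finite biindex in G, i.e., such that there are only finitely many double cosets H g H (g ∈ G). Then H has finite index in G. -/
open Pointwise

/-- **Lemma (LERF and finite biindex).**
In a LERF group, a finitely generated subgroup of finite biindex (finitely many double
cosets `H g H`) has finite index. -/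
theorem finiteIndex_of_lerf_fg_finite_biindex
    {G : Type*} [Group G] (hG : IsLERF G) (H : Subgroup G) (hfg : H.FG)
    (hbi : {d : Set G | ∃ g : G, d = (H : Set G) * {g} * (H : Set G)}.Finite) :
    H.FiniteIndex := by
  have hfin : {K : Subgroup G | H ≤ K ∧ K.FiniteIndex}.Finite := by
    refine Set.Finite.of_finite_image (f := fun K : Subgroup G =>
      {d : Set G | (∃ g : G, d = (H : Set G) * {g} * (H : Set G)) ∧ d ⊆ (K : Set G)})
      (hbi.finite_subsets.subset ?_) ?_
    · rintro _ ⟨K, _, rfl⟩ d hd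
      exact hd.1
    · have key : ∀ K L : Subgroup G, H ≤ K →
          {d : Set G | (∃ g : G, d = (H : Set G) * {g} * (H : Set G)) ∧ d ⊆ (K : Set G)} =
          {d : Set G | (∃ g : G, d = (H : Set G) * {g} * (H : Set G)) ∧ d ⊆ (L : Set G)} →
          K ≤ L := by
        intro K L hK h g hg
        have h1 : (H : Set G) * {g} * (H : Set G) ∈
            {d : Set G | (∃ g : G, d = (H : Set G) * {g} * (H : Set G)) ∧ d ⊆ (K : Set G)} := by
          refine ⟨⟨g, rfl⟩, ?_⟩
          rintro _ ⟨_, ⟨a, ha, _, rfl, rfl⟩, b, hb, rfl⟩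
          exact K.mul_mem (K.mul_mem (hK ha) hg) (hK hb)
        rw [h] at h1
        refine h1.2 ⟨g, ⟨1, H.one_mem, g, rfl, ?_⟩, 1, H.one_mem, ?_⟩ <;> simp
      intro K hK L hL h
      exact le_antisymm (key K L hK.1 h) (key L K hL.1 h.symm)
  rw [hG H hfg, sInf_eq_iInf']
  have := hfin.to_subtype
  exact Subgroup.finiteIndex_iInf fun K => K.2.2
end

section
/- Let B be an infinite group generated by a finite subset T. Then there exist a map ρ : B → ℤ and a sequence x : ℤ → B such that: x(0) = 1; for every n ∈ ℤ, x(n)⁻¹ · x(n+1) ∈ T ∪ T⁻¹; ρ(x(n)) = n for every n ∈ ℤ; and |ρ(b·t) − ρ(b)| ≤ 1 for every b ∈ B and every t ∈ T ∪ T⁻¹. (That is, ρ is a 1-Lipschitz quasi-retraction of B onto ℤ with respect to the word metric of T, admitting the honest geodesic section n ↦ x(n).) -/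
open Pointwise

section aux
variable {B : Type*} [Group B]

noncomputable def wlen (S : Set B) (g : B) : ℕ := sInf {n | g ∈ S ^ n}

lemma wlen_spec (S : Set B) (h : ∀ g : B, ∃ n : ℕ, g ∈ S ^ n) (g : B) : g ∈ S ^ wlen S g :=
  Nat.sInf_mem (s := {n | g ∈ S ^ n}) (h g)

lemma wlen_le (S : Set B) {g : B} {n : ℕ} (h : g ∈ S ^ n) : wlen S g ≤ n :=
  Nat.sInf_le (s := {n | g ∈ S ^ n}) h

lemma wlen_mul (S : Set B) (h : ∀ g : B, ∃ n : ℕ, g ∈ S ^ n) (g s : B) (hs : s ∈ S) :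
    wlen S (g * s) ≤ wlen S g + 1 := by
  apply wlen_le
  rw [pow_succ]
  exact Set.mul_mem_mul (wlen_spec S h g) hs

lemma wlen_geod (S : Set B) (h : ∀ g : B, ∃ n : ℕ, g ∈ S ^ n) (m : ℕ) :
    ∀ g : B, wlen S g = m → ∃ p : ℕ → B, p m = g ∧ (∀ i ≤ m, wlen S (p i) = i) ∧
      ∀ i < m, (p i)⁻¹ * p (i + 1) ∈ S := by
  induction m with
  | zero =>
    intro g hg
    refine ⟨fun _ => g, rfl, ?_, ?_⟩
    · intro i hi
      have : i = 0 := by omega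
      rw [hg, this]
    · intro i hi
      omega
  | succ m ih =>
    intro g hg
    have h1 := wlen_spec S h g
    rw [hg, pow_succ] at h1
    obtain ⟨a, ha, s, hs, rfl⟩ := Set.mem_mul.1 h1
    have h2 := wlen_le S ha
    have h3 := wlen_mul S h a s hs
    obtain ⟨p, hp, hl, hst⟩ := ih a (by omega)
    refine ⟨fun i => if i ≤ m then p i else a * s, ?_, ?_, ?_⟩
    · simp
    · intro i hi
      by_cases him : i ≤ m
      · simp only [him, if_true]
        exact hl i him
      · simp only [him, if_false]
        omega
    · intro i hi
      by_cases him : i + 1 ≤ m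
      · have : i ≤ m := by omega
        simp only [him, this, if_true]
        exact hst i (by omega)
      · have : i = m := by omega
        subst this
        simp [hp, hs]

lemma ultra_finite {α : Type*} (U : Ultrafilter ℕ) (F : Set α) (hF : F.Finite) (f : ℕ → α)
    (h : ∀ᶠ k in (U : Filter ℕ), f k ∈ F) : ∃ a ∈ F, ∀ᶠ k in (U : Filter ℕ), f k = a := by
  have h' : ∀ᶠ k in (U : Filter ℕ), ∃ a ∈ F, f k = a := by
    filter_upwards [h] with k hk
    exact ⟨_, hk, rfl⟩
  exact (Ultrafilter.eventually_exists_mem_iff hF).1 h'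

end aux

/-- **Proposition (Bodart).**
Every infinite group `B` with a finite generating set `T` admits a 1-Lipschitz
quasi-retraction `ρ : B → ℤ` (for the word metric of `T`) with an honest geodesic section
`n ↦ x n`. -/
theorem exists_quasiRetraction_to_int
    {B : Type*} [Group B] [Infinite B] (T : Finset B)
    (hT : Subgroup.closure (T : Set B) = ⊤) :
    ∃ (ρ : B → ℤ) (x : ℤ → B),
      x 0 = 1 ∧
      (∀ n : ℤ, (x n)⁻¹ * x (n + 1) ∈ (T : Set B) ∪ (T : Set B)⁻¹) ∧
      (∀ n : ℤ, ρ (x n) = n) ∧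
      (∀ b : B, ∀ t ∈ (T : Set B) ∪ (T : Set B)⁻¹, |ρ (b * t) - ρ b| ≤ 1) := by
  obtain ⟨S, hS⟩ : ∃ S : Set B, S = (T : Set B) ∪ (T : Set B)⁻¹ := ⟨_, rfl⟩
  rw [← hS]
  have hfin : S.Finite := by
    rw [hS]
    exact T.finite_toSet.union T.finite_toSet.inv
  have hinv : ∀ s ∈ S, s⁻¹ ∈ S := by
    intro s hs
    rw [hS] at hs ⊢
    simp only [Set.mem_union, Set.mem_inv, inv_inv] at hs ⊢
    exact hs.symm
  have hgen : ∀ g : B, ∃ n : ℕ, g ∈ S ^ n := by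
    intro g
    have hg : g ∈ Subgroup.closure (T : Set B) := by rw [hT]; trivial
    induction hg using Subgroup.closure_induction_right with
    | one => exact ⟨0, by simp⟩
    | mul_right a _ y hy ih =>
      obtain ⟨n, hn⟩ := ih
      refine ⟨n + 1, ?_⟩
      rw [pow_succ]
      exact Set.mul_mem_mul hn (by rw [hS]; exact Or.inl hy)
    | mul_inv_cancel a _ y hy ih =>
      obtain ⟨n, hn⟩ := ih
      refine ⟨n + 1, ?_⟩
      rw [pow_succ]
      exact Set.mul_mem_mul hn (by rw [hS]; exact Or.inr (by simpa using hy))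
  have hlip : ∀ g s : B, s ∈ S → |(wlen S (g * s) : ℤ) - wlen S g| ≤ 1 := by
    intro g s hs
    have h1 := wlen_mul S hgen g s hs
    have h2 := wlen_mul S hgen (g * s) s⁻¹ (hinv s hs)
    rw [mul_inv_cancel_right] at h2
    rw [abs_le]
    omega
  have hpow : ∀ n : ℕ, (S ^ n).Finite := by
    intro n
    induction n with
    | zero => simp
    | succ n ih =>
      rw [pow_succ]
      exact Set.Finite.mul ih hfin
  have hbig : ∀ k : ℕ, ∃ g : B, k ≤ wlen S g := by
    intro k
    by_contra! hcon
    have : (Set.univ : Set B) ⊆ ⋃ n ∈ Set.Iio k, S ^ n := by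
      intro g _
      simp only [Set.mem_iUnion]
      exact ⟨wlen S g, hcon g, wlen_spec S hgen g⟩
    exact Set.infinite_univ
      (((Set.finite_Iio k).biUnion fun n _ => hpow n).subset this)
  have hk : ∀ k : ℕ, ∃ (ρ : B → ℤ) (x : ℤ → B), x 0 = 1 ∧
      (∀ n : ℤ, -k ≤ n → n < k → (x n)⁻¹ * x (n + 1) ∈ S) ∧
      (∀ n : ℤ, -k ≤ n → n < k → ρ (x n) = n) ∧
      (∀ b : B, ∀ t ∈ S, |ρ (b * t) - ρ b| ≤ 1) := by
    intro k
    obtain ⟨g, hg⟩ := hbig (2 * k)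
    obtain ⟨p, -, hl, hst⟩ := wlen_geod S hgen _ g rfl
    refine ⟨fun b => wlen S (p k * b) - k, fun n => (p k)⁻¹ * p (n + k).toNat, ?_, ?_, ?_, ?_⟩
    · simp
    · intro n h1 h2
      have : (n + 1 + k).toNat = (n + k).toNat + 1 := by omega
      simp only [this]
      have := hst (n + k).toNat (by omega)
      simpa [mul_assoc] using this
    · intro n h1 h2
      simp only [mul_inv_cancel_left]
      rw [hl _ (by omega)]
      omega
    · intro b t ht
      have := hlip (p k * b) t ht
      rw [mul_assoc] at this
      simpa using this
  choose ρ x hx0 hxs hρx hρl using hk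
  let U : Ultrafilter ℕ := Filter.hyperfilter ℕ
  have hU : ∀ n : ℤ, ∀ᶠ k in (U : Filter ℕ), -((k : ℕ) : ℤ) ≤ n ∧ n < (k : ℤ) := by
    intro n
    have : ∀ᶠ k in Filter.atTop, -((k : ℕ) : ℤ) ≤ n ∧ n < k := by
      filter_upwards [Filter.eventually_ge_atTop (n.natAbs + 1)] with k hk
      omega
    exact this.filter_mono Nat.hyperfilter_le_atTop
  have hX : ∀ n : ℤ, ∃ a, ∀ᶠ k in (U : Filter ℕ), x k n = a := by
    intro n
    induction n using Int.induction_on with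
    | zero => exact ⟨1, Filter.Eventually.of_forall hx0⟩
    | succ n ih =>
      obtain ⟨a, ha⟩ := ih
      obtain ⟨s, -, hs⟩ := ultra_finite U S hfin (fun k => (x k n)⁻¹ * x k (n + 1)) (by
        filter_upwards [hU n] with k hk
        exact hxs k n hk.1 hk.2)
      refine ⟨a * s, ?_⟩
      filter_upwards [ha, hs] with k h1 h2
      rw [← h1, ← h2, mul_inv_cancel_left]
    | pred n ih =>
      obtain ⟨a, ha⟩ := ih
      obtain ⟨s, -, hs⟩ := ultra_finite U S hfin
        (fun k => (x k (-n - 1))⁻¹ * x k (-n - 1 + 1)) (by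
          filter_upwards [hU (-n - 1)] with k hk
          exact hxs k _ hk.1 hk.2)
      refine ⟨a * s⁻¹, ?_⟩
      filter_upwards [ha, hs] with k h1 h2
      rw [← h1, ← h2, sub_add_cancel]
      group
  have hR1 : ∀ m : ℕ, ∀ b ∈ S ^ m, ∃ c, ∀ᶠ k in (U : Filter ℕ), ρ k b = c := by
    intro m
    induction m with
    | zero =>
      intro b hb
      have hb : b = 1 := by simpa using hb
      refine ⟨0, ?_⟩
      filter_upwards [hU 0] with k hk
      rw [hb, ← hx0 k, hρx k 0 hk.1 hk.2]
    | succ m ih =>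
      intro b hb
      rw [pow_succ] at hb
      obtain ⟨a, ha, s, hs, rfl⟩ := Set.mem_mul.1 hb
      obtain ⟨c, hc⟩ := ih a ha
      obtain ⟨d, -, hd⟩ := ultra_finite U (Set.Icc (c - 1) (c + 1)) (Set.finite_Icc _ _)
        (fun k => ρ k (a * s)) (by
          filter_upwards [hc] with k hk
          have := abs_le.1 (hρl k a s hs)
          rw [hk] at this
          constructor <;> linarith [this.1, this.2])
      exact ⟨d, hd⟩
  have hR : ∀ b, ∃ c, ∀ᶠ k in (U : Filter ℕ), ρ k b = c := fun b =>
    (hgen b).elim fun m hm => hR1 m b hm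
  choose X hX using hX
  choose R hR using hR
  refine ⟨R, X, ?_, ?_, ?_, ?_⟩
  · obtain ⟨k, h1⟩ := (hX 0).exists
    rw [← h1, hx0]
  · intro n
    obtain ⟨k, h1, h2, h3⟩ := ((hX n).and ((hX (n + 1)).and (hU n))).exists
    rw [← h1, ← h2]
    exact hxs k n h3.1 h3.2
  · intro n
    obtain ⟨k, h1, h2, h3⟩ := ((hX n).and ((hR (X n)).and (hU n))).exists
    rw [← h2, ← h1]
    exact hρx k n h3.1 h3.2
  · intro b t ht
    obtain ⟨k, h1, h2⟩ := ((hR b).and (hR (b * t))).exists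
    rw [← h1, ← h2]
    exact hρl k b t ht
end

section
/- Every infinite group B generated by a finite subset T contains a bi-infinite geodesic through the identity: there exists x : ℤ → B with x(0) = 1 such that for all integers i ≤ j, the word length of x(i)⁻¹ · x(j) with respect to T equals j − i. -/
open Pointwise

/-- The word length of `b` with respect to a generating set `T`: the least `m` such that
`b` is a product of `m` elements of `T ∪ T⁻¹`. -/
noncomputable def wordLength {B : Type*} [Group B] (T : Set B) (b : B) : ℕ :=
  sInf {m : ℕ | ∃ l : List B, l.length = m ∧ (∀ x ∈ l, x ∈ T ∪ T⁻¹) ∧ l.prod = b}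

section helpers
variable {B : Type*} [Group B]

theorem wl_le {T : Set B} (l : List B) (h : ∀ x ∈ l, x ∈ T ∪ T⁻¹) :
    wordLength T l.prod ≤ l.length := Nat.sInf_le ⟨l, rfl, h, rfl⟩

theorem wl_exists {T : Set B} (hT : Subgroup.closure T = ⊤) (b : B) :
    ∃ l : List B, l.length = wordLength T b ∧ (∀ x ∈ l, x ∈ T ∪ T⁻¹) ∧ l.prod = b := by
  have hb : b ∈ (Subgroup.closure T).toSubmonoid := by rw [hT]; trivial
  rw [Subgroup.closure_toSubmonoid] at hb
  obtain ⟨l, hl, hp⟩ := Submonoid.exists_list_of_mem_closure hb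
  exact Nat.sInf_mem (s := {m : ℕ | ∃ l : List B, l.length = m ∧
    (∀ x ∈ l, x ∈ T ∪ T⁻¹) ∧ l.prod = b}) ⟨l.length, l, rfl, hl, hp⟩

theorem wl_mul {T : Set B} (hT : Subgroup.closure T = ⊤) (a b : B) :
    wordLength T (a * b) ≤ wordLength T a + wordLength T b := by
  obtain ⟨l, h1, h2, h3⟩ := wl_exists hT a
  obtain ⟨m, k1, k2, k3⟩ := wl_exists hT b
  have := wl_le (T := T) (l ++ m) (fun x hx => (List.mem_append.1 hx).elim (h2 x) (k2 x))
  rwa [List.prod_append, List.length_append, h1, h3, k1, k3] at this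

theorem sphere_finite (T : Finset B) (n : ℕ) :
    {b : B | ∃ l : List B, l.length = n ∧ (∀ x ∈ l, x ∈ (T : Set B) ∪ (T : Set B)⁻¹) ∧
      l.prod = b}.Finite := by
  induction n with
  | zero =>
    refine (Set.finite_singleton (1 : B)).subset ?_
    rintro b ⟨l, h1, -, h3⟩
    rw [List.length_eq_zero_iff] at h1
    subst h1
    simpa using h3.symm
  | succ n ih =>
    refine ((T.finite_toSet.union T.finite_toSet.inv).mul ih).subset ?_
    rintro b ⟨l, h1, h2, h3⟩
    cases l with
    | nil => simp at h1
    | cons a l =>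
      refine Set.mem_mul.2 ⟨a, h2 a (by simp), l.prod, ⟨l, by simpa using h1,
        fun x hx => h2 x (by simp [hx]), rfl⟩, by simpa using h3⟩

theorem ball_finite (T : Finset B) (hT : Subgroup.closure (T : Set B) = ⊤) (n : ℕ) :
    {b : B | wordLength (T : Set B) b ≤ n}.Finite := by
  refine ((Set.finite_Iic n).biUnion (fun m _ => sphere_finite T m)).subset ?_
  intro b hb
  exact Set.mem_biUnion (x := wordLength (T : Set B) b) hb (wl_exists hT b)

theorem finite_geod [Infinite B] (T : Finset B) (hT : Subgroup.closure (T : Set B) = ⊤) (n : ℕ) :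
    ∃ x : ℤ → B, x 0 = 1 ∧ ∀ i j : ℤ, -n ≤ i → i ≤ j → j ≤ n →
      (wordLength (T : Set B) ((x i)⁻¹ * x j) : ℤ) = j - i := by
  obtain ⟨b, hb⟩ := (ball_finite T hT (2 * n)).infinite_compl.nonempty
  have hb : 2 * n < wordLength (T : Set B) b := by simpa using hb
  obtain ⟨l, h1, h2, h3⟩ := wl_exists hT b
  have key : ∀ i d : ℕ, i + d ≤ l.length →
      wordLength (T : Set B) (((l.take i).prod)⁻¹ * (l.take (i + d)).prod) = d := by
    intro i d hd
    have e : ((l.take i).prod)⁻¹ * (l.take (i + d)).prod = ((l.drop i).take d).prod := by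
      rw [List.take_add, List.prod_append, inv_mul_cancel_left]
    rw [e]
    have u := wl_le (T := (T : Set B)) ((l.drop i).take d)
      (fun x hx => h2 x (List.mem_of_mem_drop (List.mem_of_mem_take hx)))
    have u1 := wl_le (T := (T : Set B)) (l.take i) (fun x hx => h2 x (List.mem_of_mem_take hx))
    have u2 := wl_le (T := (T : Set B)) (l.drop (i + d))
      (fun x hx => h2 x (List.mem_of_mem_drop hx))
    have eb : (l.take i).prod * ((l.drop i).take d).prod * (l.drop (i + d)).prod = b := by
      rw [← List.prod_append, ← List.take_add, ← List.prod_append, List.take_append_drop, h3]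
    have v1 := wl_mul hT ((l.take i).prod * ((l.drop i).take d).prod) (l.drop (i + d)).prod
    have v2 := wl_mul hT (l.take i).prod ((l.drop i).take d).prod
    rw [eb] at v1
    simp only [List.length_take, List.length_drop] at u u1 u2
    omega
  refine ⟨fun i => ((l.take n).prod)⁻¹ * (l.take (i + n).toNat).prod, by simp, ?_⟩
  intro i j hi hij hj
  have := key (i + n).toNat (j - i).toNat (by omega)
  rw [show (i + n).toNat + (j - i).toNat = (j + n).toNat by omega] at this
  have e : (((l.take n).prod)⁻¹ * (l.take (i + n).toNat).prod)⁻¹ *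
      (((l.take n).prod)⁻¹ * (l.take (j + n).toNat).prod) =
      ((l.take (i + n).toNat).prod)⁻¹ * (l.take (j + n).toNat).prod := by group
  simp only [e, this]
  omega

end helpers

/-- **Lemma (bi-infinite geodesics).**
Every infinite group `B` with a finite generating set `T` contains a bi-infinite geodesic
through the identity: a sequence `x : ℤ → B` with `x 0 = 1` such that the word length of
`(x i)⁻¹ * x j` equals `j - i` for all `i ≤ j`. -/
theorem exists_biinfinite_geodesic
    {B : Type*} [Group B] [Infinite B] (T : Finset B)
    (hT : Subgroup.closure (T : Set B) = ⊤) :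
    ∃ x : ℤ → B, x 0 = 1 ∧
      ∀ i j : ℤ, i ≤ j → (wordLength (T : Set B) ((x i)⁻¹ * x j) : ℤ) = j - i := by
  choose y y0 hy using finite_geod T hT
  let U : Ultrafilter ℕ := Filter.hyperfilter ℕ
  have hU : ∀ m : ℕ, ∀ᶠ n in (U : Filter ℕ), m ≤ n := fun m =>
    (Nat.hyperfilter_le_atTop) (Filter.eventually_ge_atTop m)
  have ex : ∀ i : ℤ, ∃ b : B, ∀ᶠ n in (U : Filter ℕ), y n i = b := by
    intro i
    have hf := ball_finite T hT i.natAbs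
    have hm : ∀ᶠ n in (U : Filter ℕ), ∃ b ∈ {b : B | wordLength (T : Set B) b ≤ i.natAbs} ∪
        {b : B | wordLength (T : Set B) b ≤ i.natAbs}⁻¹, y n i = b := by
      filter_upwards [hU i.natAbs] with n hn
      refine ⟨_, ?_, rfl⟩
      rcases le_total 0 i with h | h
      · left
        have := hy n 0 i (by omega) h (by omega)
        rw [y0, inv_one, one_mul] at this
        show wordLength (T : Set B) (y n i) ≤ i.natAbs
        omega
      · right
        have := hy n i 0 (by omega) h (by omega)
        rw [y0, mul_one] at this
        show wordLength (T : Set B) (y n i)⁻¹ ≤ i.natAbs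
        omega
    obtain ⟨b, -, hb⟩ := (Ultrafilter.finite_biUnion_mem_iff (hf.union hf.inv) (s := fun b => {n | y n i = b})).1 (by
      filter_upwards [hm] with n hn
      simpa using hn)
    exact ⟨b, hb⟩
  choose x hx using ex
  refine ⟨x, ?_, ?_⟩
  · obtain ⟨n, hn⟩ := (hx 0).exists
    rw [← hn, y0]
  · intro i j hij
    obtain ⟨n, ⟨h1, h2⟩, h3, h4⟩ :=
      (((hx i).and (hx j)).and ((hU i.natAbs).and (hU j.natAbs))).exists
    rw [← h1, ← h2]
    exact hy n i j (by omega) hij (by omega)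
end
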